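/- arXiv:2601.15244 — 2 statements merged into one kernel-verified Lean document; each statement's English description precedes it below -/
import Mathlib

section
/- For all integers n, δ, a, b with n ≥ 0, δ ≥ 1, a ≥ 6, b ≥ (a+3)·n and b ≥ 6δ − 3n + 3, one has −n·(⌊a/3⌋+2)² + 2·(⌊a/3⌋+2)·(⌊b/3⌋+n+2) − 4δ ≥ 10. -/
/-- The Reider-criterion inequality `N² ≥ 10` for `N = σ*A − E − K_X`,
where `A = ⌊a/3⌋C₀ + ⌊b/3⌋F`.  Here `Int.fdiv x 3` is the integer floor `⌊x/3⌋`. -/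
theorem stmt_1 (n δ a b : ℤ) (hn : 0 ≤ n) (hδ : 1 ≤ δ) (ha : 6 ≤ a)
    (hb1 : (a + 3) * n ≤ b) (hb2 : 6 * δ - 3 * n + 3 ≤ b) :
    10 ≤ -n * (Int.fdiv a 3 + 2) ^ 2
      + 2 * (Int.fdiv a 3 + 2) * (Int.fdiv b 3 + n + 2) - 4 * δ := by
  rw [Int.fdiv_eq_ediv_of_nonneg a (by norm_num), Int.fdiv_eq_ediv_of_nonneg b (by norm_num)]
  have hp : 2 ≤ a / 3 := by omega
  have hpa : 3 * (a / 3) ≤ a := by omega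
  have hq2 : 2 * δ - n + 1 ≤ b / 3 := by omega
  have hq1 : (a / 3 + 1) * n ≤ b / 3 := by
    rw [Int.le_ediv_iff_mul_le (by norm_num)]
    nlinarith [mul_nonneg hn (sub_nonneg.2 hpa)]
  generalize a / 3 = p at *
  generalize b / 3 = q at *
  have h1 : 0 ≤ (2 * p + 2) * (q - (p + 1) * n) :=
    mul_nonneg (by linarith) (by linarith)
  have h2 : 0 ≤ n * ((p + 2) * p) :=
    mul_nonneg hn (mul_nonneg (by linarith) (by linarith))
  nlinarith [h1, h2]
end

section
/- For all integers n, δ, a, b with n ≥ 0, δ ≥ 1, a ≥ 6, b ≥ (a+7)·n and b ≥ 6δ − 3n + 3, setting f = a − 2⌊a/3⌋ + 2 and s = b − 2⌊b/3⌋, one has f·(2s + 2n + 4) − n·f² − 4δ ≥ 10. -/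
/-- The Reider-criterion inequality `N² ≥ 10` for `N = σ*B − E − K_X`,
where `B = (a − 2⌊a/3⌋)C₀ + (b − 2⌊b/3⌋)F`.
Here `Int.fdiv x 3` is the integer floor `⌊x/3⌋`. -/
theorem stmt_3 (n δ a b : ℤ) (hn : 0 ≤ n) (hδ : 1 ≤ δ) (ha : 6 ≤ a)
    (hb1 : (a + 7) * n ≤ b) (hb2 : 6 * δ - 3 * n + 3 ≤ b) :
    10 ≤ (a - 2 * Int.fdiv a 3 + 2) * (2 * (b - 2 * Int.fdiv b 3) + 2 * n + 4)
      - n * (a - 2 * Int.fdiv a 3 + 2) ^ 2 - 4 * δ := by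
  have e1 : Int.fdiv a 3 = a / 3 := Int.fdiv_eq_ediv_of_nonneg a (by norm_num)
  have e2 : Int.fdiv b 3 = b / 3 := Int.fdiv_eq_ediv_of_nonneg b (by norm_num)
  rw [e1, e2]
  obtain ⟨f, hf⟩ : ∃ f, f = a - 2 * (a / 3) + 2 := ⟨_, rfl⟩
  obtain ⟨s, hs⟩ : ∃ s, s = b - 2 * (b / 3) := ⟨_, rfl⟩
  rw [← hf, ← hs]
  have f4 : 4 ≤ f := by omega
  have fa : 3 * f - 3 ≤ a + 7 := by omega
  have sb : b ≤ 3 * s := by omega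
  have h1 : (3 * f - 3) * n ≤ (a + 7) * n := mul_le_mul_of_nonneg_right fa hn
  have h2 : 0 ≤ s - n * (f - 1) := by linarith
  have h3 : 0 ≤ (f - 1) * (s - n * (f - 1)) := mul_nonneg (by linarith) h2
  have h4 : 0 ≤ n * (f * (f - 2)) :=
    mul_nonneg hn (mul_nonneg (by linarith) (by linarith))
  have h5 : 4 * δ ≤ 2 * s + 2 * n - 2 := by linarith
  nlinarith
end
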